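/- arXiv:1105.5959 — 3 statements merged into one kernel-verified Lean document; each statement's English description precedes it below -/
import Mathlib

section
/- Let 𝕋 be a time scale and dσ the Lebesgue–Stieltjes measure generated by the forward shift σ. Then for all α, β ∈ 𝕋 with α ≤ β, dσ([α, β)) = β − α. -/
open MeasureTheory Set Filter
open scoped ENNReal Classical

/-- Forward shift of a time scale. -/
noncomputable def tsSigma (T : Set ℝ) (t : ℝ) : ℝ :=
  if ({s | s ∈ T ∧ t < s}).Nonempty then sInf {s | s ∈ T ∧ t < s} else sSup T

/-!
The measure generated by a function `F` gives `[α, β)` the mass `F(β⁻) - F(α⁻)`. At a point `τ` of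
the time scale, `t ≤ σ(t) ≤ τ` for every `t < τ`, so `σ(τ⁻) = τ`.
-/

open scoped Topology

section LeftLimits

variable {R : Type*} [LinearOrder R] [TopologicalSpace R] [OrderTopology R] [DenselyOrdered R]
  [FirstCountableTopology R]

theorem isCountablyGenerated_atTop_Iio (b : R) :
    (atTop : Filter (Iio b)).IsCountablyGenerated := by
  rw [← comap_coe_Iio_nhdsLT b (Order.IsSuccPrelimit.of_dense b)]
  infer_instance

variable [MeasurableSpace R]

theorem tendsto_measure_Ioc_nhdsLT (μ : Measure R) (a b : R) :
    Tendsto (fun d ↦ μ (Ioc a d)) (𝓝[<] b) (𝓝 (μ (Ioo a b))) := by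
  have hUnion : ⋃ d : Iio b, Ioc a (d : R) = Ioo a b := by
    ext x
    simp only [mem_iUnion, mem_Ioc, mem_Ioo, Subtype.exists, mem_Iio, exists_prop]
    constructor
    · rintro ⟨d, hdb, hax, hxd⟩
      exact ⟨hax, hxd.trans_lt hdb⟩
    · rintro ⟨hax, hxb⟩
      exact ⟨x, hxb, hax, le_rfl⟩
  have := isCountablyGenerated_atTop_Iio b
  rw [← hUnion, ← tendsto_comp_coe_Iio_atTop (Order.IsSuccPrelimit.of_dense b)]
  exact tendsto_measure_iUnion_atTop (antitone_const.Ioc (Subtype.mono_coe _))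

theorem tendsto_measure_Ioo_nhdsLT [OpensMeasurableSpace R] {μ : Measure R} {a b : R}
    (hfin : ∃ c < a, μ (Ioo c b) ≠ ∞) :
    Tendsto (fun c ↦ μ (Ioo c b)) (𝓝[<] a) (𝓝 (μ (Ico a b))) := by
  obtain ⟨c₀, hc₀a, hc₀⟩ := hfin
  have hInter : ⋂ c : Iio a, Ioo (c : R) b = Ico a b := by
    ext x
    simp only [mem_iInter, mem_Ioo, mem_Ico, Subtype.forall, mem_Iio]
    constructor
    · intro hx
      exact ⟨le_of_forall_lt fun c hc ↦ (hx c hc).1, (hx c₀ hc₀a).2⟩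
    · rintro ⟨hax, hxb⟩ c hca
      exact ⟨hca.trans_le hax, hxb⟩
  have := isCountablyGenerated_atTop_Iio a
  rw [← hInter, ← tendsto_comp_coe_Iio_atTop (Order.IsSuccPrelimit.of_dense a)]
  exact tendsto_measure_iInter_atTop (fun _ ↦ measurableSet_Ioo.nullMeasurableSet)
    ((Subtype.mono_coe _).Ioo antitone_const) ⟨⟨c₀, hc₀a⟩, hc₀⟩

variable {μ : Measure R} {F : R → ℝ} {a b : R} {la lb : ℝ}

theorem measure_Ioo_of_tendsto_nhdsLT (hab : a < b)
    (hμ : ∀ d, a < d → d < b → μ (Ioc a d) = ENNReal.ofReal (F d - F a))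
    (hb : Tendsto F (𝓝[<] b) (𝓝 lb)) :
    μ (Ioo a b) = ENNReal.ofReal (lb - F a) := by
  have : (𝓝[<] b).NeBot := nhdsLT_neBot_of_exists_lt ⟨a, hab⟩
  have hlim := ENNReal.tendsto_ofReal (hb.sub_const (F a))
  refine tendsto_nhds_unique_of_eventuallyEq (tendsto_measure_Ioc_nhdsLT μ a b) hlim ?_
  filter_upwards [Ioo_mem_nhdsLT hab] with d hd using hμ d hd.1 hd.2

theorem measure_Ico_of_tendsto_nhdsLT [NoMinOrder R] [OpensMeasurableSpace R] (hab : a ≤ b)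
    (hμ : ∀ c d, c < a → c < d → d < b → μ (Ioc c d) = ENNReal.ofReal (F d - F c))
    (ha : Tendsto F (𝓝[<] a) (𝓝 la)) (hb : Tendsto F (𝓝[<] b) (𝓝 lb)) :
    μ (Ico a b) = ENNReal.ofReal (lb - la) := by
  have hIoo : ∀ c < a, μ (Ioo c b) = ENNReal.ofReal (lb - F c) := fun c hca ↦
    measure_Ioo_of_tendsto_nhdsLT (hca.trans_le hab) (fun d ↦ hμ c d hca) hb
  obtain ⟨c₀, hc₀a⟩ := exists_lt a
  have hfin : μ (Ioo c₀ b) ≠ ∞ := hIoo c₀ hc₀a ▸ ENNReal.ofReal_ne_top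
  have hlim := ENNReal.tendsto_ofReal (ha.const_sub lb)
  refine tendsto_nhds_unique_of_eventuallyEq
    (tendsto_measure_Ioo_nhdsLT ⟨c₀, hc₀a, hfin⟩) hlim ?_
  filter_upwards [self_mem_nhdsWithin] with c hca using hIoo c hca

end LeftLimits

section ForwardShift

variable {T : Set ℝ} {t τ : ℝ}

theorem tsSigma_mem_Icc (hτ : τ ∈ T) (htτ : t < τ) : tsSigma T t ∈ Icc t τ := by
  have hne : {s | s ∈ T ∧ t < s}.Nonempty := ⟨τ, hτ, htτ⟩
  have hlb : t ∈ lowerBounds {s | s ∈ T ∧ t < s} := fun _ hs ↦ hs.2.le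
  rw [tsSigma, if_pos hne]
  exact ⟨le_csInf hne hlb, csInf_le ⟨t, hlb⟩ ⟨hτ, htτ⟩⟩

theorem tendsto_tsSigma_nhdsLT (hτ : τ ∈ T) : Tendsto (tsSigma T) (𝓝[<] τ) (𝓝 τ) := by
  have hbounds : ∀ᶠ t in 𝓝[<] τ, tsSigma T t ∈ Icc t τ :=
    eventually_mem_nhdsWithin.mono fun _ ↦ tsSigma_mem_Icc hτ
  exact tendsto_of_tendsto_of_tendsto_of_le_of_le' (tendsto_id.mono_left nhdsWithin_le_nhds)
    tendsto_const_nhds (hbounds.mono fun _ ht ↦ ht.1) (hbounds.mono fun _ ht ↦ ht.2)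

end ForwardShift

theorem stieltjes_measure_of_forward_shift_Ico_general
    (T : Set ℝ) (μ : Measure ℝ)
    (hμ : ∀ c d : ℝ, c ≤ d → μ (Set.Ioc c d) = ENNReal.ofReal (tsSigma T d - tsSigma T c)) :
    ∀ α ∈ T, ∀ β ∈ T, α ≤ β → μ (Set.Ico α β) = ENNReal.ofReal (β - α) :=
  fun _ hα _ hβ hαβ ↦ measure_Ico_of_tendsto_nhdsLT hαβ (fun c d _ hcd _ ↦ hμ c d hcd.le)
    (tendsto_tsSigma_nhdsLT hα) (tendsto_tsSigma_nhdsLT hβ)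

/-- If `μ` is the Lebesgue–Stieltjes measure generated by the forward shift `σ` of a time
scale `𝕋` (i.e. `μ((c,d]) = σ(d) - σ(c)`), then `μ([α,β)) = β - α` for all `α ≤ β` in `𝕋`. -/
theorem stieltjes_measure_of_forward_shift_Ico
    (T : Set ℝ) (hne : T.Nonempty) (hcl : IsClosed T) (μ : Measure ℝ)
    (hμ : ∀ c d : ℝ, c ≤ d → μ (Set.Ioc c d) = ENNReal.ofReal (tsSigma T d - tsSigma T c)) :
    ∀ α ∈ T, ∀ β ∈ T, α ≤ β → μ (Set.Ico α β) = ENNReal.ofReal (β - α) :=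
  stieltjes_measure_of_forward_shift_Ico_general T μ hμ
end

section
/- Let 𝕋 be a bounded time scale. Then the Lebesgue–Stieltjes measure dσ generated by the forward shift σ decomposes as dσ = (Lebesgue measure restricted to 𝕋) + Σ_{t ∈ 𝕋, σ(t) > t} μ(t)·δ_t, where δ_t is the Dirac measure at t and μ(t) = σ(t) − t is the graininess; that is, for every Borel set B ⊆ ℝ, dσ(B) = λ(B ∩ 𝕋) + Σ_{t ∈ B ∩ 𝕋, σ(t)>t} (σ(t) − t), the sum running over the (countable) set of right-scattered points in B. -/
open MeasureTheory Set Filter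
open scoped ENNReal Classical

/-!
The interval from `σ(c)` to `σ(d)` is, up to its endpoints, the disjoint union of `𝕋 ∩ (c, d]` and
the gaps `(t, σ(t))` with `t ∈ 𝕋 ∩ (c, d]` right-scattered: a point of the interval outside `𝕋` lies
in the gap that starts at its largest predecessor in `𝕋`. Computing lengths gives the decomposition
on the half-open intervals `(c, d]`, which determine a locally finite measure.
-/

theorem sum_smul_dirac_subtype_apply {α : Type*} [MeasurableSpace α] (S : Set α) (w : α → ℝ≥0∞)
    {B : Set α} (hB : MeasurableSet B) :
    Measure.sum (fun a : S => w a • Measure.dirac (a : α)) B = ∑' a : ↥(B ∩ S), w a := by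
  rw [Measure.sum_apply _ hB, tsum_subtype (B ∩ S) w, inter_comm, ← indicator_indicator,
    ← tsum_subtype S (B.indicator w)]
  refine tsum_congr fun a => ?_
  rw [Measure.smul_apply, Measure.dirac_apply' _ hB, smul_eq_mul, ← indicator_mul_right]
  simp only [Pi.one_apply, mul_one]

theorem isLocallyFiniteMeasure_of_Ioc_lt_top {α : Type*} [MeasurableSpace α] [LinearOrder α]
    [TopologicalSpace α] [OrderClosedTopology α] [NoMinOrder α] [NoMaxOrder α] {μ : Measure α}
    (hμ : ∀ c d : α, c < d → μ (Ioc c d) < ∞) : IsLocallyFiniteMeasure μ where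
  finiteAtNhds x := by
    obtain ⟨c, hc⟩ := exists_lt x
    obtain ⟨d, hd⟩ := exists_gt x
    exact ⟨Ioc c d, Ioc_mem_nhds hc hd, hμ c d (hc.trans hd)⟩

section ForwardShift

variable {T : Set ℝ} {s t x : ℝ}

theorem isGLB_tsSigma (h : (T ∩ Ioi t).Nonempty) : IsGLB (T ∩ Ioi t) (tsSigma T t) := by
  rw [show tsSigma T t = sInf (T ∩ Ioi t) from if_pos h]
  exact isGLB_csInf h ⟨t, fun _ hs => hs.2.le⟩

theorem isLUB_tsSigma (hne : T.Nonempty) (h : ¬(T ∩ Ioi t).Nonempty) :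
    IsLUB T (tsSigma T t) := by
  rw [show tsSigma T t = sSup T from if_neg h]
  exact isLUB_csSup hne ⟨t, fun s hs => le_of_not_gt fun hts => h ⟨s, hs, hts⟩⟩

theorem tsSigma_mem (hne : T.Nonempty) (hcl : IsClosed T) (t : ℝ) : tsSigma T t ∈ T := by
  by_cases h : (T ∩ Ioi t).Nonempty
  · exact closure_minimal inter_subset_left hcl ((isGLB_tsSigma h).mem_closure h)
  · exact (isLUB_tsSigma hne h).mem_of_isClosed hne hcl

theorem tsSigma_le (hs : s ∈ T) (hts : t < s) : tsSigma T t ≤ s :=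
  (isGLB_tsSigma ⟨s, hs, hts⟩).1 ⟨hs, hts⟩

theorem le_tsSigma (hs : s ∈ T) (hts : t < s) (hx : ∀ u ∈ T, t < u → x ≤ u) :
    x ≤ tsSigma T t :=
  (isGLB_tsSigma ⟨s, hs, hts⟩).2 fun u hu => hx u hu.1 hu.2

theorem le_tsSigma_of_mem_of_le (hs : s ∈ T) (hst : s ≤ t) : s ≤ tsSigma T t := by
  by_cases h : (T ∩ Ioi t).Nonempty
  · exact (isGLB_tsSigma h).2 fun _ hu => hst.trans hu.2.le
  · exact (isLUB_tsSigma ⟨s, hs⟩ h).1 hs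

theorem monotone_tsSigma (hne : T.Nonempty) (hcl : IsClosed T) : Monotone (tsSigma T) := by
  intro t d htd
  have hmem := tsSigma_mem hne hcl t
  rcases le_or_gt (tsSigma T t) d with h | h
  · exact le_tsSigma_of_mem_of_le hmem h
  · exact le_tsSigma hmem h fun u hu hdu => tsSigma_le hu (htd.trans_lt hdu)

theorem disjoint_Ioo_tsSigma (T : Set ℝ) (t : ℝ) : Disjoint T (Ioo t (tsSigma T t)) :=
  disjoint_left.2 fun _ hs hts => hts.2.not_ge (tsSigma_le hs hts.1)

theorem pairwiseDisjoint_Ioo_tsSigma (T : Set ℝ) :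
    T.PairwiseDisjoint fun t => Ioo t (tsSigma T t) := by
  intro t ht s hs hts
  wlog h : t < s generalizing s t
  · exact (this hs ht hts.symm (hts.lt_or_gt.resolve_left h)).symm
  · exact Ioo_disjoint_Ioo.2 (min_le_of_left_le (le_max_of_le_right (tsSigma_le hs h)))

theorem exists_mem_Ioo_tsSigma (hcl : IsClosed T) (hx : x ∉ T)
    (hbelow : (T ∩ Iic x).Nonempty) (habove : (T ∩ Ioi x).Nonempty) :
    ∃ t ∈ T, x ∈ Ioo t (tsSigma T t) := by
  have hbdd : BddAbove (T ∩ Iic x) := ⟨x, fun _ hu => hu.2⟩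
  obtain ⟨htT, htx⟩ := (hcl.inter isClosed_Iic).csSup_mem hbelow hbdd
  obtain ⟨b, hbT, hxb⟩ := habove
  set t := sSup (T ∩ Iic x)
  have hlt : t < x := htx.lt_of_ne (ne_of_mem_of_not_mem htT hx)
  have hle : x ≤ tsSigma T t := le_tsSigma hbT (hlt.trans hxb) fun u hu htu =>
    le_of_not_gt fun hux => htu.not_ge (le_csSup hbdd ⟨hu, hux.le⟩)
  have hne : x ≠ tsSigma T t := (ne_of_mem_of_not_mem (tsSigma_mem ⟨t, htT⟩ hcl t) hx).symm
  exact ⟨t, htT, hlt, hle.lt_of_ne hne⟩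

end ForwardShift

/-- The right-scattered points of the time scale `T`. -/
def rightScattered (T : Set ℝ) : Set ℝ :=
  {t | t ∈ T ∧ t < tsSigma T t}

/-- The union of the gaps `(t, σ(t))` of the time scale `T` whose left endpoint `t` lies in `B`. -/
def gapUnion (T B : Set ℝ) : Set ℝ :=
  ⋃ t ∈ B ∩ rightScattered T, Ioo t (tsSigma T t)

section Gaps

variable {T : Set ℝ}

theorem countable_rightScattered (T : Set ℝ) : (rightScattered T).Countable :=
  ((pairwiseDisjoint_Ioo_tsSigma T).subset fun _ ht => ht.1).countable_of_isOpen
    (fun _ _ => isOpen_Ioo) fun _ ht => nonempty_Ioo.2 ht.2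

theorem disjoint_gapUnion (T B : Set ℝ) : Disjoint T (gapUnion T B) :=
  disjoint_iUnion₂_right.2 fun t _ => disjoint_Ioo_tsSigma T t

theorem measurableSet_gapUnion (T B : Set ℝ) : MeasurableSet (gapUnion T B) :=
  (isOpen_biUnion fun _ _ => isOpen_Ioo).measurableSet

theorem volume_gapUnion (T B : Set ℝ) :
    volume (gapUnion T B) =
      ∑' t : ↥(B ∩ rightScattered T), ENNReal.ofReal (tsSigma T t - t) := by
  rw [gapUnion, measure_biUnion ((countable_rightScattered T).mono inter_subset_right)
    ((pairwiseDisjoint_Ioo_tsSigma T).subset fun _ ht => ht.2.1) fun _ _ => measurableSet_Ioo]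
  simp only [Real.volume_Ioo]

theorem Ioc_inter_union_gapUnion_subset (hne : T.Nonempty) (hcl : IsClosed T) (c d : ℝ) :
    Ioc c d ∩ T ∪ gapUnion T (Ioc c d) ⊆ Icc (tsSigma T c) (tsSigma T d) := by
  refine union_subset (fun x hx => ?_) (iUnion₂_subset fun t ht x hx => ?_)
  · exact ⟨tsSigma_le hx.2 hx.1.1, le_tsSigma_of_mem_of_le hx.2 hx.1.2⟩
  · exact ⟨(tsSigma_le ht.2.1 ht.1.1).trans hx.1.le,
      hx.2.le.trans (monotone_tsSigma hne hcl ht.1.2)⟩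

theorem Ioo_subset_Ioc_inter_union_gapUnion (hne : T.Nonempty) (hcl : IsClosed T) (c d : ℝ) :
    Ioo (tsSigma T c) (tsSigma T d) ⊆ Ioc c d ∩ T ∪ gapUnion T (Ioc c d) := by
  rintro x ⟨hcx, hxd⟩
  have le_of_mem_of_le : ∀ t ∈ T, t ≤ x → t ≤ d := fun t ht htx =>
    le_of_not_gt fun hdt => (htx.trans_lt hxd).not_ge (tsSigma_le ht hdt)
  by_cases hxT : x ∈ T
  · have hcx' : c < x := lt_of_not_ge fun hxc => hcx.not_ge (le_tsSigma_of_mem_of_le hxT hxc)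
    exact Or.inl ⟨⟨hcx', le_of_mem_of_le x hxT le_rfl⟩, hxT⟩
  · obtain ⟨t, htT, htx, hxt⟩ := exists_mem_Ioo_tsSigma hcl hxT
      ⟨_, tsSigma_mem hne hcl c, hcx.le⟩ ⟨_, tsSigma_mem hne hcl d, hxd⟩
    have hct : c < t := (monotone_tsSigma hne hcl).reflect_lt (hcx.trans hxt)
    exact Or.inr (mem_biUnion
      ⟨⟨hct, le_of_mem_of_le t htT htx.le⟩, htT, htx.trans hxt⟩ ⟨htx, hxt⟩)

theorem volume_Ioc_inter_union_gapUnion (hne : T.Nonempty) (hcl : IsClosed T) (c d : ℝ) :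
    volume (Ioc c d ∩ T ∪ gapUnion T (Ioc c d)) =
      ENNReal.ofReal (tsSigma T d - tsSigma T c) := by
  apply le_antisymm
  · rw [← Real.volume_Icc]
    exact measure_mono (Ioc_inter_union_gapUnion_subset hne hcl c d)
  · rw [← Real.volume_Ioo]
    exact measure_mono (Ioo_subset_Ioc_inter_union_gapUnion hne hcl c d)

end Gaps

/-- The right-hand side of the decomposition as a measure: Lebesgue measure restricted to `T` plus,
at each right-scattered point of `T`, an atom whose mass is the graininess. -/
noncomputable def grainMeasure (T : Set ℝ) : Measure ℝ :=
  volume.restrict T + Measure.sum fun t : rightScattered T =>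
    ENNReal.ofReal (tsSigma T t - t) • Measure.dirac (t : ℝ)

theorem grainMeasure_apply (T : Set ℝ) {B : Set ℝ} (hB : MeasurableSet B) :
    grainMeasure T B = volume (B ∩ T) +
      ∑' t : ↥(B ∩ rightScattered T), ENNReal.ofReal (tsSigma T t - t) := by
  rw [grainMeasure, Measure.add_apply, Measure.restrict_apply hB,
    sum_smul_dirac_subtype_apply _ (fun t => ENNReal.ofReal (tsSigma T t - t)) hB]

theorem grainMeasure_Ioc {T : Set ℝ} (hne : T.Nonempty) (hcl : IsClosed T) (c d : ℝ) :
    grainMeasure T (Ioc c d) = ENNReal.ofReal (tsSigma T d - tsSigma T c) := by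
  have hdisj : Disjoint (Ioc c d ∩ T) (gapUnion T (Ioc c d)) :=
    (disjoint_gapUnion T _).mono_left inter_subset_right
  rw [grainMeasure_apply T measurableSet_Ioc, ← volume_gapUnion,
    ← measure_union hdisj (measurableSet_gapUnion T _), volume_Ioc_inter_union_gapUnion hne hcl]

theorem stieltjes_measure_forward_shift_decomposition_general
    (T : Set ℝ) (hne : T.Nonempty) (hcl : IsClosed T) (μ : Measure ℝ)
    (hμ : ∀ c d : ℝ, c ≤ d → μ (Set.Ioc c d) = ENNReal.ofReal (tsSigma T d - tsSigma T c)) :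
    ∀ B : Set ℝ, MeasurableSet B →
      μ B = volume (B ∩ T) +
        ∑' t : {t : ℝ // t ∈ B ∩ T ∧ t < tsSigma T t}, ENNReal.ofReal (tsSigma T t - t) := by
  intro B hB
  have : IsLocallyFiniteMeasure μ := isLocallyFiniteMeasure_of_Ioc_lt_top fun c d hcd =>
    hμ c d hcd.le ▸ ENNReal.ofReal_lt_top
  have hμT : μ = grainMeasure T := Measure.ext_of_Ioc _ _ fun c d hcd =>
    (hμ c d hcd.le).trans (grainMeasure_Ioc hne hcl c d).symm
  have hset : {t | t ∈ B ∩ T ∧ t < tsSigma T t} = B ∩ rightScattered T := inter_assoc B T _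
  rw [hμT, grainMeasure_apply T hB]
  exact congrArg _ (tsum_congr_set_coe (fun t => ENNReal.ofReal (tsSigma T t - t)) hset.symm)

/-- Lebesgue decomposition of the Lebesgue–Stieltjes measure `μ = dσ` generated by the forward
shift of a bounded time scale `𝕋`: for every Borel set `B`,
`dσ(B) = λ(B ∩ 𝕋) + ∑_{t ∈ B ∩ 𝕋 right-scattered} (σ(t) - t)`. -/
theorem stieltjes_measure_forward_shift_decomposition
    (T : Set ℝ) (hne : T.Nonempty) (hcl : IsClosed T)
    (hbb : BddBelow T) (hba : BddAbove T) (μ : Measure ℝ)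
    (hμ : ∀ c d : ℝ, c ≤ d → μ (Set.Ioc c d) = ENNReal.ofReal (tsSigma T d - tsSigma T c)) :
    ∀ B : Set ℝ, MeasurableSet B →
      μ B = volume (B ∩ T) +
        ∑' t : {t : ℝ // t ∈ B ∩ T ∧ t < tsSigma T t}, ENNReal.ofReal (tsSigma T t - t) :=
  stieltjes_measure_forward_shift_decomposition_general T hne hcl μ hμ
end

section
/- Let g be locally integrable with respect to |r| dσ_κ and z ∈ ℂ. Then for every c ∈ 𝕋_κ and d₁, d₂ ∈ ℂ there exists exactly one solution pair (u, u^[1]) of (ℓ − z)u = g with u(c) = d₁ and u^[1](c) = d₂. -/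
open MeasureTheory Set Filter
open scoped ENNReal NNReal Classical

/-- Backward shift of a time scale. -/
noncomputable def tsRho (T : Set ℝ) (t : ℝ) : ℝ :=
  if ({s | s ∈ T ∧ s < t}).Nonempty then sSup {s | s ∈ T ∧ s < t} else sInf T

/-- `𝕋_κ` : the time scale with the left endpoint removed if it is finite and right-scattered. -/
noncomputable def tsKappa (T : Set ℝ) : Set ℝ :=
  if BddBelow T ∧ sInf T < tsSigma T (sInf T) then T \ {sInf T} else T

/-- Extension `p̄` of a function on `𝕋_κ` to all of `ℝ`. -/
noncomputable def extK (T : Set ℝ) (p : ℝ → ℂ) (t : ℝ) : ℂ :=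
  if t ∈ tsKappa T then p t else p (tsSigma (tsKappa T) t)

/-- Coercion of a real-valued coefficient to a complex-valued one. -/
def cR (f : ℝ → ℝ) : ℝ → ℂ := fun t => (f t : ℂ)

/-- `(u, u^[1])` is an integrated pair with density `h` against the measure `μ = dσ_κ`. -/
def IsPair (T : Set ℝ) (μ : Measure ℝ) (p : ℝ → ℂ) (u u1 h : ℝ → ℂ) : Prop :=
  ∀ c x : ℝ, c ≤ x →
    u x = u c + ∫ t in c..x, u1 t / extK T p t ∧
    u1 x = u1 c + ∫ t in Set.Ioc c x, h t ∂μ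

/-- `(u, u^[1])` is a solution pair of `(ℓ - z) u = g`. -/
def IsSLSol (T : Set ℝ) (μ : Measure ℝ) (p r q : ℝ → ℂ) (z : ℂ) (g : ℝ → ℂ)
    (u u1 : ℝ → ℂ) : Prop :=
  IsPair T μ p u u1 (fun t => (q t - z * r t) * u t - r t * g t)

/-- Wronskian of two pairs. -/
def Wr (u u1 v v1 : ℝ → ℂ) (x : ℝ) : ℂ := u x * v1 x - u1 x * v x

/-- The integrand `|u|² r` as an `ℝ≥0∞`-valued function. -/
noncomputable def sqWeight (r : ℝ → ℝ) (u : ℝ → ℂ) (t : ℝ) : ℝ≥0∞ :=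
  ((‖u t‖₊ : ℝ≥0∞)) ^ 2 * ENNReal.ofReal (r t)

/-- `u` lies in `L²` near the left endpoint `a`. -/
def L2NearLeft (T : Set ℝ) (μ : Measure ℝ) (r : ℝ → ℝ) (u : ℝ → ℂ) : Prop :=
  ∀ c ∈ tsKappa T, ∫⁻ t in {t | (∃ s ∈ T, s < t) ∧ t ≤ c} ∩ tsKappa T, sqWeight r u t ∂μ < ∞

/-- `u` lies in `L²` near the right endpoint `b`. -/
def L2NearRight (T : Set ℝ) (μ : Measure ℝ) (r : ℝ → ℝ) (u : ℝ → ℂ) : Prop :=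
  ∀ c ∈ tsKappa T, ∫⁻ t in {t | c ≤ t ∧ ∃ s ∈ T, t < s} ∩ tsKappa T, sqWeight r u t ∂μ < ∞

/-- `ℓ` is in the limit-circle case at the left endpoint. -/
def LimitCircleLeft (T : Set ℝ) (μ : Measure ℝ) (p r q : ℝ → ℝ) : Prop :=
  ∀ z : ℂ, ∀ u u1 : ℝ → ℂ, IsSLSol T μ (cR p) (cR r) (cR q) z 0 u u1 → L2NearLeft T μ r u

/-- `ℓ` is in the limit-point case at the left endpoint. -/
def LimitPointLeft (T : Set ℝ) (μ : Measure ℝ) (p r q : ℝ → ℝ) : Prop :=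
  ∀ z : ℂ, ∃ u u1 : ℝ → ℂ, IsSLSol T μ (cR p) (cR r) (cR q) z 0 u u1 ∧ ¬ L2NearLeft T μ r u

/-- `ℓ` is in the limit-circle case at the right endpoint. -/
def LimitCircleRight (T : Set ℝ) (μ : Measure ℝ) (p r q : ℝ → ℝ) : Prop :=
  ∀ z : ℂ, ∀ u u1 : ℝ → ℂ, IsSLSol T μ (cR p) (cR r) (cR q) z 0 u u1 → L2NearRight T μ r u

/-- `ℓ` is in the limit-point case at the right endpoint. -/
def LimitPointRight (T : Set ℝ) (μ : Measure ℝ) (p r q : ℝ → ℝ) : Prop :=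
  ∀ z : ℂ, ∃ u u1 : ℝ → ℂ, IsSLSol T μ (cR p) (cR r) (cR q) z 0 u u1 ∧ ¬ L2NearRight T μ r u

/-- The action `ℓ u = (-h + q u)/r` of the differential expression on a pair with density `h`. -/
noncomputable def ellApply (r q : ℝ → ℝ) (h u : ℝ → ℂ) (t : ℝ) : ℂ :=
  (-h t + (q t : ℂ) * u t) / (r t : ℂ)

/-- Membership in `L²(𝕋_κ; r dσ_κ)`. -/
def MemL2T (T : Set ℝ) (μ : Measure ℝ) (r : ℝ → ℝ) (u : ℝ → ℂ) : Prop :=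
  ∫⁻ t in tsKappa T, sqWeight r u t ∂μ < ∞

/-- The pair `(u, u^[1])` with density `h` belongs to `D_ℓ²`. -/
def MemD2 (T : Set ℝ) (μ : Measure ℝ) (p r q : ℝ → ℝ) (u u1 h : ℝ → ℂ) : Prop :=
  LocallyIntegrable h μ ∧ IsPair T μ (cR p) u u1 h ∧ MemL2T T μ r u ∧
    MemL2T T μ r (ellApply r q h u)

/-- The filter `x ↓ a`, `x ∈ 𝕋`. -/
noncomputable def leftLimFilter (T : Set ℝ) : Filter ℝ :=
  if BddBelow T then nhdsWithin (sInf T) T else Filter.atBot ⊓ Filter.principal T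

/-- The filter `x ↑ b`, `x ∈ 𝕋`. -/
noncomputable def rightLimFilter (T : Set ℝ) : Filter ℝ :=
  if BddAbove T then nhdsWithin (sSup T) T else Filter.atTop ⊓ Filter.principal T

/-- The measure `r dσ_κ` on `𝕋_κ`, giving the Hilbert space `L²(𝕋_κ; r dσ_κ)`. -/
noncomputable def wM (T : Set ℝ) (μ : Measure ℝ) (r : ℝ → ℝ) : Measure ℝ :=
  (μ.restrict (tsKappa T)).withDensity fun t => ENNReal.ofReal (r t)

/-!
The equation is a first order system `du = u₁ / p̄ dt`, `du₁ = ((q - z r) u - r g) dσ_κ` with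
locally integrable coefficients. Integrating the second equation and inserting the result into the
first one turns the initial value problem into a fixed point equation for `u` alone. Its Volterra
operator is a contraction with constant `1 / 2` on all of `ℝ` at once, for a sup norm weighted by
the exponential of twice the primitive of `‖w‖ (1 + |∫ k dμ|)`, where `μ = dσ_κ`, `w = 1 / p̄` and
`k` dominates the coefficients of the second equation: multiplying by the rate and integrating
reproduces half of the weight. No smallness of the atoms of `dσ_κ` is involved, because `dt` has
none.

On a time scale, `p̄` is `p` composed with the map `t ↦ min (𝕋_κ ∩ [t, ∞))`, under which `dρ` is the
image of Lebesgue measure on the convex hull of `𝕋`; so `1 / p̄` is locally integrable.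
-/

section ScalarEstimates

theorem intervalIntegrable_of_locallyIntegrable {E : Type*} [NormedAddCommGroup E] {μ : Measure ℝ}
    {h : ℝ → E} (hh : LocallyIntegrable h μ) (a b : ℝ) : IntervalIntegrable h μ a b :=
  intervalIntegrable_iff.2
    ((hh.integrableOn_isCompact isCompact_uIcc).mono_set uIoc_subset_uIcc)

theorem locallyIntegrable_norm {X E : Type*} [TopologicalSpace X] [MeasurableSpace X]
    [NormedAddCommGroup E] {μ : Measure X} {h : X → E} (hh : LocallyIntegrable h μ) :
    LocallyIntegrable (fun x => ‖h x‖) μ := fun x =>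
  let ⟨s, hs, hi⟩ := hh x
  ⟨s, hs, hi.norm⟩

theorem absolutelyContinuousOnInterval_comp_of_lipschitzOnWith {X Y : Type*}
    [PseudoMetricSpace X] [PseudoMetricSpace Y] {f : ℝ → X} {φ : X → Y} {a b : ℝ} {K : ℝ≥0}
    (hφ : LipschitzOnWith K φ (f '' uIcc a b)) (hf : AbsolutelyContinuousOnInterval f a b) :
    AbsolutelyContinuousOnInterval (φ ∘ f) a b := by
  refine squeeze_zero' (.of_forall fun E => by positivity) ?_
    (by simpa using Tendsto.const_mul (K : ℝ) hf)
  filter_upwards [mem_inf_of_right (mem_principal_self _)] with E hE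
  rw [Finset.mul_sum]
  exact Finset.sum_le_sum fun i hi => hφ.dist_le_mul _
    (mem_image_of_mem f (hE.1 i hi).1) _ (mem_image_of_mem f (hE.1 i hi).2)

theorem integral_exp_mul_primitive {m : ℝ → ℝ} {a b : ℝ} (hm : IntervalIntegrable m volume a b)
    (κ : ℝ) :
    ∫ t in a..b, Real.exp (κ * ∫ y in a..t, m y) * (κ * m t) =
      Real.exp (κ * ∫ y in a..b, m y) - 1 := by
  set V : ℝ → ℝ := fun t => κ * ∫ y in a..t, m y
  have hV : AbsolutelyContinuousOnInterval V a b :=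
    (hm.absolutelyContinuousOnInterval_intervalIntegral left_mem_uIcc).const_mul κ
  obtain ⟨K, hK⟩ := (Real.contDiff_exp (n := 1)).locallyLipschitz.locallyLipschitzOn
    |>.exists_lipschitzOnWith_of_compact (isCompact_uIcc.image_of_continuousOn hV.continuousOn)
  have hexp := absolutelyContinuousOnInterval_comp_of_lipschitzOnWith hK hV
  calc ∫ t in a..b, Real.exp (V t) * (κ * m t)
      = ∫ t in a..b, deriv (Real.exp ∘ V) t := by
        refine intervalIntegral.integral_congr_ae ?_
        filter_upwards [hm.ae_hasDerivAt_integral] with t ht hmem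
        exact ((ht (uIoc_subset_uIcc hmem) a left_mem_uIcc).const_mul κ).exp.deriv.symm
    _ = Real.exp (V b) - 1 := by
        rw [hexp.integral_deriv_eq_sub]
        simp [V]

theorem abs_integral_mul_exp_abs_primitive_le {m : ℝ → ℝ} (hm : LocallyIntegrable m)
    (hm₀ : ∀ t, 0 ≤ m t) (c x : ℝ) :
    |∫ t in c..x, m t * Real.exp (2 * |∫ y in c..t, m y|)| ≤
      Real.exp (2 * |∫ t in c..x, m t|) / 2 := by
  obtain ⟨ε, hε, hsign⟩ : ∃ ε : ℝ, |ε| = 1 ∧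
      ∀ t ∈ uIcc c x, |∫ y in c..t, m y| = ε * ∫ y in c..t, m y := by
    rcases le_total c x with hcx | hxc
    · refine ⟨1, abs_one, fun t ht => ?_⟩
      rw [one_mul, abs_of_nonneg]
      exact intervalIntegral.integral_nonneg (uIcc_of_le hcx ▸ ht).1 fun y _ => hm₀ y
    · refine ⟨-1, by simp, fun t ht => ?_⟩
      rw [intervalIntegral.integral_symm, abs_neg, abs_of_nonneg, neg_one_mul, neg_neg]
      exact intervalIntegral.integral_nonneg (uIcc_of_ge hxc ▸ ht).2 fun y _ => hm₀ y
  have hint : (2 * ε) * ∫ t in c..x, m t * Real.exp (2 * |∫ y in c..t, m y|) =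
      Real.exp (2 * |∫ t in c..x, m t|) - 1 := by
    rw [hsign x right_mem_uIcc, ← mul_assoc,
      ← integral_exp_mul_primitive (intervalIntegrable_of_locallyIntegrable hm c x),
      ← intervalIntegral.integral_const_mul]
    refine intervalIntegral.integral_congr fun t ht => ?_
    simp only [hsign t ht]
    ring_nf
  have hone : 1 ≤ Real.exp (2 * |∫ t in c..x, m t|) := Real.one_le_exp (by positivity)
  have habs := congrArg abs hint
  rw [abs_mul, abs_mul, hε, abs_two, abs_of_nonneg (sub_nonneg.2 hone)] at habs
  linarith

end ScalarEstimates

theorem exists_continuous_isFixedPt_of_weighted_contraction {X E : Type*} [TopologicalSpace X]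
    [NormedAddCommGroup E] [NormedSpace ℝ E] [CompleteSpace E] {φ : X → ℝ} (hφ : Continuous φ)
    (hφ₀ : ∀ x, 0 < φ x) {F : (X → E) → X → E} {K : ℝ≥0} (hK : K < 1)
    (hF : ∀ u C, Continuous u → (∀ x, ‖u x‖ ≤ C * φ x) →
      Continuous (F u) ∧ ∃ C', ∀ x, ‖F u x‖ ≤ C' * φ x)
    (hlip : ∀ u v C, Continuous u → Continuous v → (∀ x, ‖u x - v x‖ ≤ C * φ x) →
      ∀ x, ‖F u x - F v x‖ ≤ K * C * φ x) :
    ∃ u, Continuous u ∧ Function.IsFixedPt F u := by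
  have hnorm (y : E) (x : X) : ‖(φ x)⁻¹ • y‖ = ‖y‖ / φ x := by
    rw [norm_smul, norm_inv, Real.norm_of_nonneg (hφ₀ x).le, inv_mul_eq_div]
  have hscale (y : E) (x : X) : ‖φ x • y‖ = ‖y‖ * φ x := by
    rw [norm_smul, Real.norm_of_nonneg (hφ₀ x).le, mul_comm]
  have hcont (b : BoundedContinuousFunction X E) : Continuous fun x => φ x • b x :=
    hφ.smul b.continuous
  have hbdd (b : BoundedContinuousFunction X E) (x : X) : ‖φ x • b x‖ ≤ ‖b‖ * φ x := by
    rw [hscale]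
    exact mul_le_mul_of_nonneg_right (b.norm_coe_le_norm x) (hφ₀ x).le
  choose hFc C hFC using fun b => hF _ _ (hcont b) (hbdd b)
  let G : BoundedContinuousFunction X E → BoundedContinuousFunction X E := fun b =>
    .ofNormedAddCommGroup (fun x => (φ x)⁻¹ • F (fun y => φ y • b y) x)
      ((hφ.inv₀ fun x => (hφ₀ x).ne').smul (hFc b)) (C b)
      fun x => by rw [hnorm, div_le_iff₀ (hφ₀ x)]; exact hFC b x
  have hG : ContractingWith K G := by
    refine ⟨hK, .of_dist_le_mul fun b b' => ?_⟩
    rw [BoundedContinuousFunction.dist_le (by positivity)]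
    intro x
    rw [dist_eq_norm]
    change ‖(φ x)⁻¹ • F _ x - (φ x)⁻¹ • F _ x‖ ≤ _
    rw [← smul_sub, hnorm, div_le_iff₀ (hφ₀ x)]
    refine hlip _ _ _ (hcont b) (hcont b') (fun y => ?_) x
    rw [← smul_sub, hscale, ← dist_eq_norm]
    exact mul_le_mul_of_nonneg_right (BoundedContinuousFunction.dist_coe_le_dist y) (hφ₀ y).le
  have : Nonempty (BoundedContinuousFunction X E) := ⟨0⟩
  set b := hG.fixedPoint G
  refine ⟨fun x => φ x • b x, hcont b, funext fun x => ?_⟩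
  have hb : (φ x)⁻¹ • F (fun y => φ y • b y) x = b x :=
    DFunLike.congr_fun hG.fixedPoint_isFixedPt x
  rw [← hb, smul_inv_smul₀ (hφ₀ x).ne']

section Primitives

variable {E : Type*} [NormedAddCommGroup E] [NormedSpace ℝ E] {μ : Measure ℝ}

theorem continuousAt_primitive_of_measure_singleton_eq_zero {h : ℝ → E}
    (hh : LocallyIntegrable h μ) (c : ℝ) {x : ℝ} (hx : μ {x} = 0) :
    ContinuousAt (fun t => ∫ y in c..t, h y ∂μ) x :=
  (intervalIntegral.continuousWithinAt_primitive hx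
    (intervalIntegrable_of_locallyIntegrable hh (min c (x - 1)) (max c (x + 1)))).continuousAt
    (Icc_mem_nhds (by linarith) (by linarith))

theorem aestronglyMeasurable_primitive [SFinite μ] {h : ℝ → E} (hh : LocallyIntegrable h μ)
    (c : ℝ) (ρ : Measure ℝ) [NullSingletonClass ρ] :
    AEStronglyMeasurable (fun t => ∫ y in c..t, h y ∂μ) ρ := by
  have hatoms : {x : ℝ | 0 < μ {x}}.Countable :=
    Measure.countable_meas_level_set_pos measurable_id
  rw [← Measure.restrict_eq_self_of_ae_mem (hatoms.ae_notMem ρ)]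
  refine ContinuousOn.aestronglyMeasurable (fun x hx => ?_) hatoms.measurableSet.compl
  exact (continuousAt_primitive_of_measure_singleton_eq_zero hh c
    (nonpos_iff_eq_zero.1 (not_lt.1 hx))).continuousWithinAt

theorem norm_primitive_le_of_mem_closedBall {h : ℝ → E} (hh : LocallyIntegrable h μ) {c t R : ℝ}
    (ht : t ∈ Metric.closedBall c R) :
    ‖∫ y in c..t, h y ∂μ‖ ≤ ∫ y in Metric.closedBall c R, ‖h y‖ ∂μ := by
  refine intervalIntegral.norm_integral_le_integral_norm_uIoc.trans ?_
  refine setIntegral_mono_set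
    (hh.integrableOn_isCompact (isCompact_closedBall c R)).norm (ae_of_all _ fun y => norm_nonneg _)
    (LE.le.eventuallyLE (uIoc_subset_uIcc.trans ?_))
  exact (convex_closedBall c R).ordConnected.uIcc_subset
    (Metric.mem_closedBall_self (dist_nonneg.trans ht)) ht

theorem locallyIntegrable_mul_add_primitive {𝔸 : Type*} [NormedRing 𝔸] [NormedAlgebra ℝ 𝔸]
    [SFinite μ] {w h : ℝ → 𝔸} (hw : LocallyIntegrable w) (hh : LocallyIntegrable h μ) (c : ℝ)
    (d : 𝔸) : LocallyIntegrable fun t => w t * (d + ∫ y in c..t, h y ∂μ) := by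
  refine locallyIntegrable_iff.2 fun S hS => ?_
  obtain ⟨R, hR⟩ := hS.isBounded.subset_closedBall c
  refine (Integrable.mul_bdd (hw.integrableOn_isCompact (isCompact_closedBall c R))
    (aestronglyMeasurable_const.add (aestronglyMeasurable_primitive hh c _))
    (c := ‖d‖ + ∫ y in Metric.closedBall c R, ‖h y‖ ∂μ) ?_).mono_measure
    (Measure.restrict_mono hR le_rfl)
  filter_upwards [ae_restrict_mem Metric.isClosed_closedBall.measurableSet] with t ht
  exact (norm_add_le _ _).trans
    (by gcongr; exact norm_primitive_le_of_mem_closedBall hh ht)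

theorem continuous_of_forall_eq_add_integral {u h : ℝ → E}
    (hu : ∀ x y, u y = u x + ∫ t in x..y, h t) : Continuous u := by
  -- An undefined integral has the junk value `0`, which forces `u` to be constant.
  have hconst {x y : ℝ} (hn : ¬IntervalIntegrable h volume x y) : u y = u x := by
    rw [hu x y, intervalIntegral.integral_undef hn, add_zero]
  have hcont (A B : ℝ) (hAB : A ≤ B) : ContinuousOn u (Icc A B) := by
    by_cases hi : IntervalIntegrable h volume A B
    · have hprim := intervalIntegral.continuousOn_primitive_interval' hi left_mem_uIcc
      rw [uIcc_of_le hAB] at hprim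
      exact (continuousOn_const.add hprim).congr fun x _ => hu A x
    · refine (continuousOn_const (c := u A)).congr fun x _ => ?_
      by_cases hAx : IntervalIntegrable h volume A x
      · rw [← hconst fun hxB => hi (hAx.trans hxB), hconst hi]
      · exact hconst hAx
  exact continuous_iff_continuousAt.2 fun x =>
    (hcont (x - 1) (x + 1) (by linarith)).continuousAt
      (Icc_mem_nhds (by linarith) (by linarith))

end Primitives

/-- `(u, u₁)` solves the first order system `du = w u₁ dt`, `du₁ = (s u - f) dμ` in integrated
form; increments over `x < y` are integrals over `(x, y]`, so that `u₁` is right-continuous. -/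
def IsIntegralSolution {𝔸 : Type*} [NormedRing 𝔸] [NormedSpace ℝ 𝔸] (μ : Measure ℝ)
    (w s f u u₁ : ℝ → 𝔸) : Prop :=
  ∀ x y, u y = u x + ∫ t in x..y, w t * u₁ t ∧
    u₁ y = u₁ x + ∫ t in x..y, (s t * u t - f t) ∂μ

section BieleckiWeight

variable {E : Type*} [NormedAddCommGroup E] {μ : Measure ℝ} {w : ℝ → E} {k : ℝ → ℝ}

/-- The logarithmic growth rate of the Bielecki weight. -/
noncomputable def bieleckiRate (μ : Measure ℝ) (w : ℝ → E) (k : ℝ → ℝ) (c t : ℝ) : ℝ :=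
  ‖w t‖ * (1 + |∫ y in c..t, k y ∂μ|)

/-- The weight `φ` for which the Volterra operator of the system is a contraction in the norm
`sup ‖u‖ / φ` (Bielecki's method). It grows away from `c` in both directions, and the factor `2`
makes the contraction constant `1 / 2`. -/
noncomputable def bieleckiWeight (μ : Measure ℝ) (w : ℝ → E) (k : ℝ → ℝ) (c x : ℝ) : ℝ :=
  Real.exp (2 * |∫ t in c..x, bieleckiRate μ w k c t|)

theorem bieleckiRate_nonneg (c t : ℝ) : 0 ≤ bieleckiRate μ w k c t := by
  unfold bieleckiRate
  positivity

theorem bieleckiWeight_pos (c x : ℝ) : 0 < bieleckiWeight μ w k c x :=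
  Real.exp_pos _

theorem one_le_bieleckiWeight (c x : ℝ) : 1 ≤ bieleckiWeight μ w k c x :=
  Real.one_le_exp (by positivity)

theorem locallyIntegrable_bieleckiRate [SFinite μ] (hw : LocallyIntegrable w)
    (hk : LocallyIntegrable k μ) (c : ℝ) : LocallyIntegrable (bieleckiRate μ w k c) := by
  have hprim := locallyIntegrable_norm
    (locallyIntegrable_mul_add_primitive (locallyIntegrable_norm hw) hk c 0)
  simp only [zero_add, norm_mul, Real.norm_eq_abs, abs_norm] at hprim
  unfold bieleckiRate
  simp only [mul_one_add]
  exact (locallyIntegrable_norm hw).add hprim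

theorem continuous_bieleckiWeight [SFinite μ] (hw : LocallyIntegrable w)
    (hk : LocallyIntegrable k μ) (c : ℝ) : Continuous (bieleckiWeight μ w k c) := by
  have hprim := intervalIntegral.continuous_primitive
    (intervalIntegrable_of_locallyIntegrable (locallyIntegrable_bieleckiRate hw hk c)) c
  exact Real.continuous_exp.comp (continuous_const.mul hprim.abs)

theorem bieleckiWeight_le_of_mem_uIcc [SFinite μ] (hw : LocallyIntegrable w)
    (hk : LocallyIntegrable k μ) {c x t : ℝ} (ht : t ∈ uIcc c x) :
    bieleckiWeight μ w k c t ≤ bieleckiWeight μ w k c x := by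
  refine Real.exp_le_exp.2 (mul_le_mul_of_nonneg_left ?_ zero_le_two)
  exact intervalIntegral.abs_integral_mono_interval (uIoc_subset_uIoc_of_uIcc_subset_uIcc
    (uIcc_subset_uIcc_left ht)) (ae_of_all _ fun y => bieleckiRate_nonneg c y)
    (intervalIntegrable_of_locallyIntegrable (locallyIntegrable_bieleckiRate hw hk c) c x)

end BieleckiWeight

section IteratedPrimitive

variable {𝔸 : Type*} [NormedRing 𝔸] [NormedAlgebra ℝ 𝔸] {μ : Measure ℝ} {w h h' : ℝ → 𝔸}

/-- The Volterra operator `h ↦ ∫_c^x w (d + ∫_c^t h dμ) dt` obtained by integrating the second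
equation of the system and inserting the result into the first one. -/
noncomputable def iteratedPrimitive (μ : Measure ℝ) (w h : ℝ → 𝔸) (c : ℝ) (d : 𝔸) (x : ℝ) : 𝔸 :=
  ∫ t in c..x, w t * (d + ∫ y in c..t, h y ∂μ)

theorem continuous_iteratedPrimitive [SFinite μ] (hw : LocallyIntegrable w)
    (hh : LocallyIntegrable h μ) (c : ℝ) (d : 𝔸) : Continuous (iteratedPrimitive μ w h c d) :=
  intervalIntegral.continuous_primitive
    (intervalIntegrable_of_locallyIntegrable (locallyIntegrable_mul_add_primitive hw hh c d)) c

theorem iteratedPrimitive_sub_iteratedPrimitive [SFinite μ] (hw : LocallyIntegrable w)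
    (hh : LocallyIntegrable h μ) (hh' : LocallyIntegrable h' μ) (c : ℝ) (d : 𝔸) (x : ℝ) :
    iteratedPrimitive μ w h c d x - iteratedPrimitive μ w h' c d x =
      iteratedPrimitive μ w (h - h') c 0 x := by
  unfold iteratedPrimitive
  rw [← intervalIntegral.integral_sub
    (intervalIntegrable_of_locallyIntegrable (locallyIntegrable_mul_add_primitive hw hh c d) c x)
    (intervalIntegrable_of_locallyIntegrable (locallyIntegrable_mul_add_primitive hw hh' c d) c x)]
  refine intervalIntegral.integral_congr fun t _ => ?_
  simp only [Pi.sub_apply]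
  rw [← mul_sub, add_sub_add_left_eq_sub, zero_add,
    intervalIntegral.integral_sub (intervalIntegrable_of_locallyIntegrable hh c t)
      (intervalIntegrable_of_locallyIntegrable hh' c t)]

theorem norm_add_primitive_le_mul_bieleckiWeight [SFinite μ] {k : ℝ → ℝ}
    (hw : LocallyIntegrable w) (hk : LocallyIntegrable k μ) (hk₀ : ∀ t, 0 ≤ k t) {c x C : ℝ} {d : 𝔸}
    (hd : ‖d‖ ≤ C) (hh : ∀ y ∈ uIcc c x, ‖h y‖ ≤ C * (k y * bieleckiWeight μ w k c y)) :
    ‖d + ∫ y in c..x, h y ∂μ‖ ≤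
      C * bieleckiWeight μ w k c x * (1 + |∫ y in c..x, k y ∂μ|) := by
  have hC : 0 ≤ C := (norm_nonneg d).trans hd
  have hφ : 0 < bieleckiWeight μ w k c x := bieleckiWeight_pos c x
  have hprim : ‖∫ y in c..x, h y ∂μ‖ ≤
      |∫ y in c..x, C * bieleckiWeight μ w k c x * k y ∂μ| := by
    refine intervalIntegral.norm_integral_le_abs_of_norm_le ?_
      ((intervalIntegrable_of_locallyIntegrable hk c x).const_mul _)
    filter_upwards [ae_restrict_mem measurableSet_uIoc] with y hy
    have hy' := uIoc_subset_uIcc hy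
    calc ‖h y‖ ≤ C * (k y * bieleckiWeight μ w k c y) := hh y hy'
      _ ≤ C * (k y * bieleckiWeight μ w k c x) := by
        gcongr
        exacts [hk₀ y, bieleckiWeight_le_of_mem_uIcc hw hk hy']
      _ = C * bieleckiWeight μ w k c x * k y := by ring
  rw [intervalIntegral.integral_const_mul, abs_mul, abs_of_nonneg (by positivity)] at hprim
  calc ‖d + ∫ y in c..x, h y ∂μ‖
      ≤ C * 1 + C * bieleckiWeight μ w k c x * |∫ y in c..x, k y ∂μ| :=
        (norm_add_le _ _).trans (add_le_add (by rwa [mul_one]) hprim)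
    _ ≤ C * bieleckiWeight μ w k c x * (1 + |∫ y in c..x, k y ∂μ|) := by
        rw [mul_one_add]
        gcongr
        exact one_le_bieleckiWeight c x

theorem norm_iteratedPrimitive_le_half_mul_bieleckiWeight [SFinite μ] {k : ℝ → ℝ}
    (hw : LocallyIntegrable w) (hk : LocallyIntegrable k μ) (hk₀ : ∀ t, 0 ≤ k t) {c x C : ℝ} {d : 𝔸}
    (hd : ‖d‖ ≤ C) (hh : ∀ y ∈ uIcc c x, ‖h y‖ ≤ C * (k y * bieleckiWeight μ w k c y)) :
    ‖iteratedPrimitive μ w h c d x‖ ≤ C / 2 * bieleckiWeight μ w k c x := by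
  have hC : 0 ≤ C := (norm_nonneg d).trans hd
  have hm := locallyIntegrable_bieleckiRate hw hk c
  have hbound : ‖iteratedPrimitive μ w h c d x‖ ≤
      |∫ t in c..x, C * (bieleckiRate μ w k c t * bieleckiWeight μ w k c t)| := by
    refine intervalIntegral.norm_integral_le_abs_of_norm_le ?_ ?_
    · filter_upwards [ae_restrict_mem measurableSet_uIoc] with t ht
      have hd_t := norm_add_primitive_le_mul_bieleckiWeight hw hk hk₀ hd fun y hy =>
        hh y (uIcc_subset_uIcc_left (uIoc_subset_uIcc ht) hy)
      calc ‖w t * (d + ∫ y in c..t, h y ∂μ)‖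
          ≤ ‖w t‖ * (C * bieleckiWeight μ w k c t * (1 + |∫ y in c..t, k y ∂μ|)) :=
            (norm_mul_le _ _).trans (by gcongr)
        _ = C * (bieleckiRate μ w k c t * bieleckiWeight μ w k c t) := by
            rw [bieleckiRate]
            ring
    · exact (intervalIntegrable_of_locallyIntegrable
        (hm.mul_continuous (continuous_bieleckiWeight hw hk c)) c x).const_mul C
  rw [intervalIntegral.integral_const_mul, abs_mul, abs_of_nonneg hC] at hbound
  calc ‖iteratedPrimitive μ w h c d x‖
      ≤ C * (bieleckiWeight μ w k c x / 2) := hbound.trans (by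
        gcongr
        exact abs_integral_mul_exp_abs_primitive_le hm (bieleckiRate_nonneg c) c x)
    _ = C / 2 * bieleckiWeight μ w k c x := by ring

end IteratedPrimitive

theorem locallyIntegrable_mul_sub {R : Type*} [NormedRing R] {μ : Measure ℝ} {s f u : ℝ → R}
    (hs : LocallyIntegrable s μ) (hf : LocallyIntegrable f μ) (hu : Continuous u) :
    LocallyIntegrable (s * u - f) μ :=
  (hs.mul_continuous hu).sub hf

section VolterraMap

variable {𝔸 : Type*} [NormedRing 𝔸] [NormedAlgebra ℝ 𝔸] {μ : Measure ℝ} [SFinite μ]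
  {w s f u v : ℝ → 𝔸} {k : ℝ → ℝ}

/-- The map whose fixed points are the first components `u` of the solutions of the system
`du = w u₁ dt`, `du₁ = (s u - f) dμ` with `u c = d₁` and `u₁ c = d₂`. -/
noncomputable def volterraMap (μ : Measure ℝ) (w s f : ℝ → 𝔸) (c : ℝ) (d₁ d₂ : 𝔸) (u : ℝ → 𝔸)
    (x : ℝ) : 𝔸 :=
  d₁ + iteratedPrimitive μ w (s * u - f) c d₂ x

theorem continuous_volterraMap (hw : LocallyIntegrable w) (hs : LocallyIntegrable s μ)
    (hf : LocallyIntegrable f μ) (c : ℝ) (d₁ d₂ : 𝔸) (hu : Continuous u) :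
    Continuous (volterraMap μ w s f c d₁ d₂ u) :=
  continuous_const.add
    (continuous_iteratedPrimitive hw (locallyIntegrable_mul_sub hs hf hu) c d₂)

theorem norm_volterraMap_le_mul_bieleckiWeight (hw : LocallyIntegrable w)
    (hk : LocallyIntegrable k μ) (hsf : ∀ t, ‖s t‖ + ‖f t‖ ≤ k t) {c C : ℝ}
    (huC : ∀ x, ‖u x‖ ≤ C * bieleckiWeight μ w k c x) (d₁ d₂ : 𝔸) (x : ℝ) :
    ‖volterraMap μ w s f c d₁ d₂ u x‖ ≤
      (‖d₁‖ + (max C 1 + ‖d₂‖) / 2) * bieleckiWeight μ w k c x := by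
  set C' := max C 1 + ‖d₂‖
  have hCC' : C ≤ C' := (le_max_left C 1).trans (le_add_of_nonneg_right (norm_nonneg d₂))
  have hC' : 1 ≤ C' := (le_max_right C 1).trans (le_add_of_nonneg_right (norm_nonneg d₂))
  have hh (y : ℝ) : ‖(s * u - f) y‖ ≤ C' * (k y * bieleckiWeight μ w k c y) := by
    have hφ : 1 ≤ bieleckiWeight μ w k c y := one_le_bieleckiWeight c y
    calc ‖s y * u y - f y‖
        ≤ ‖s y‖ * (C' * bieleckiWeight μ w k c y) + ‖f y‖ * (C' * bieleckiWeight μ w k c y) := by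
          refine (norm_sub_le _ _).trans (add_le_add ((norm_mul_le _ _).trans ?_) ?_)
          · gcongr
            exact (huC y).trans (by gcongr)
          · exact le_mul_of_one_le_right (norm_nonneg _) (one_le_mul_of_one_le_of_one_le hC' hφ)
      _ ≤ k y * (C' * bieleckiWeight μ w k c y) := by
          rw [← add_mul]
          gcongr
          exact hsf y
      _ = C' * (k y * bieleckiWeight μ w k c y) := mul_left_comm _ _ _
  have hle := norm_iteratedPrimitive_le_half_mul_bieleckiWeight (x := x) (d := d₂) hw hk
    (fun t => (by positivity : 0 ≤ ‖s t‖ + ‖f t‖).trans (hsf t))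
    (le_add_of_nonneg_left (by positivity)) fun y _ => hh y
  calc ‖volterraMap μ w s f c d₁ d₂ u x‖
      ≤ ‖d₁‖ * bieleckiWeight μ w k c x + C' / 2 * bieleckiWeight μ w k c x :=
        (norm_add_le _ _).trans (add_le_add
          (le_mul_of_one_le_right (norm_nonneg _) (one_le_bieleckiWeight c x)) hle)
    _ = (‖d₁‖ + C' / 2) * bieleckiWeight μ w k c x := (add_mul _ _ _).symm

theorem norm_volterraMap_sub_volterraMap_le (hw : LocallyIntegrable w)
    (hs : LocallyIntegrable s μ) (hf : LocallyIntegrable f μ) (hk : LocallyIntegrable k μ)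
    (hsk : ∀ t, ‖s t‖ ≤ k t) (hu : Continuous u) (hv : Continuous v) {c x C : ℝ}
    (huv : ∀ y ∈ uIcc c x, ‖u y - v y‖ ≤ C * bieleckiWeight μ w k c y) (d₁ d₂ : 𝔸) :
    ‖volterraMap μ w s f c d₁ d₂ u x - volterraMap μ w s f c d₁ d₂ v x‖ ≤
      C / 2 * bieleckiWeight μ w k c x := by
  have hk₀ (t : ℝ) : 0 ≤ k t := (norm_nonneg _).trans (hsk t)
  have hC : 0 ≤ C := nonneg_of_mul_nonneg_left
    ((norm_nonneg _).trans (huv c left_mem_uIcc)) (bieleckiWeight_pos c c)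
  rw [volterraMap, volterraMap, add_sub_add_left_eq_sub, iteratedPrimitive_sub_iteratedPrimitive hw
    (locallyIntegrable_mul_sub hs hf hu) (locallyIntegrable_mul_sub hs hf hv)]
  refine norm_iteratedPrimitive_le_half_mul_bieleckiWeight hw hk hk₀ (norm_zero.trans_le hC)
    fun y hy => ?_
  calc ‖(s * u - f - (s * v - f)) y‖ = ‖s y * (u y - v y)‖ := by simp [mul_sub]
    _ ≤ k y * (C * bieleckiWeight μ w k c y) :=
      (norm_mul_le _ _).trans (mul_le_mul (hsk y) (huv y hy) (norm_nonneg _) (hk₀ y))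
    _ = C * (k y * bieleckiWeight μ w k c y) := mul_left_comm _ _ _

theorem exists_continuous_isFixedPt_volterraMap [CompleteSpace 𝔸] (hw : LocallyIntegrable w)
    (hs : LocallyIntegrable s μ) (hf : LocallyIntegrable f μ) (c : ℝ) (d₁ d₂ : 𝔸) :
    ∃ u, Continuous u ∧ Function.IsFixedPt (volterraMap μ w s f c d₁ d₂) u := by
  have hk : LocallyIntegrable (fun t => ‖s t‖ + ‖f t‖) μ :=
    (locallyIntegrable_norm hs).add (locallyIntegrable_norm hf)
  refine exists_continuous_isFixedPt_of_weighted_contraction (K := 1 / 2)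
    (continuous_bieleckiWeight hw hk c) (bieleckiWeight_pos c) (by norm_num)
    (fun u C hu huC => ⟨continuous_volterraMap hw hs hf c d₁ d₂ hu, _,
      norm_volterraMap_le_mul_bieleckiWeight hw hk (fun _ => le_rfl) huC d₁ d₂⟩)
    fun u v C hu hv huv x => ?_
  convert norm_volterraMap_sub_volterraMap_le hw hs hf hk
    (fun t => le_add_of_nonneg_right (norm_nonneg (f t))) hu hv (fun y _ => huv y) d₁ d₂ using 2
  simp [div_eq_inv_mul]

theorem eq_of_isFixedPt_volterraMap (hw : LocallyIntegrable w) (hs : LocallyIntegrable s μ)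
    (hf : LocallyIntegrable f μ) {c : ℝ} {d₁ d₂ : 𝔸} (hu : Continuous u) (hv : Continuous v)
    (hFu : Function.IsFixedPt (volterraMap μ w s f c d₁ d₂) u)
    (hFv : Function.IsFixedPt (volterraMap μ w s f c d₁ d₂) v) : u = v := by
  funext x
  have hk := locallyIntegrable_norm hs
  set φ := bieleckiWeight μ w (fun t => ‖s t‖) c
  have hφ (y : ℝ) : 0 < φ y := bieleckiWeight_pos c y
  obtain ⟨x₀, hx₀, hmax⟩ := (isCompact_uIcc (a := c) (b := x)).exists_isMaxOn nonempty_uIcc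
    (((hu.sub hv).norm.div (continuous_bieleckiWeight hw hk c) fun y => (hφ y).ne').continuousOn)
  set M := ‖u x₀ - v x₀‖ / φ x₀
  have hM (y : ℝ) (hy : y ∈ uIcc c x) : ‖u y - v y‖ ≤ M * φ y :=
    (div_le_iff₀ (hφ y)).1 (hmax hy)
  have hhalf : M ≤ M / 2 := by
    have hle := norm_volterraMap_sub_volterraMap_le hw hs hf hk (fun _ => le_rfl) hu hv
      (fun y hy => hM y (uIcc_subset_uIcc_left hx₀ hy)) d₁ d₂
    rw [hFu, hFv] at hle
    exact (div_le_iff₀ (hφ x₀)).2 hle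
  have hzero : ‖u x - v x‖ ≤ 0 :=
    (hM x right_mem_uIcc).trans (mul_nonpos_of_nonpos_of_nonneg (by linarith) (hφ x).le)
  exact sub_eq_zero.1 (norm_le_zero_iff.1 hzero)

end VolterraMap

section IntegralSystem

variable {𝔸 : Type*} [NormedRing 𝔸] [NormedAlgebra ℝ 𝔸] {μ : Measure ℝ} {w s f : ℝ → 𝔸}

theorem isIntegralSolution_iff_isFixedPt_volterraMap [SFinite μ] (hw : LocallyIntegrable w)
    (hs : LocallyIntegrable s μ) (hf : LocallyIntegrable f μ) (c : ℝ) {u u₁ : ℝ → 𝔸} :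
    IsIntegralSolution μ w s f u u₁ ↔
      Continuous u ∧ Function.IsFixedPt (volterraMap μ w s f c (u c) (u₁ c)) u ∧
        u₁ = fun x => u₁ c + ∫ t in c..x, (s t * u t - f t) ∂μ := by
  have hfix (hu₁ : u₁ = fun x => u₁ c + ∫ t in c..x, (s t * u t - f t) ∂μ) (x : ℝ) :
      volterraMap μ w s f c (u c) (u₁ c) u x = u c + ∫ t in c..x, w t * u₁ t :=
    congrArg (u c + ·) (intervalIntegral.integral_congr fun t _ =>
      congrArg (w t * ·) (congrFun hu₁ t).symm)
  constructor
  · intro hu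
    have hu₁ := funext fun x => (hu c x).2
    exact ⟨continuous_of_forall_eq_add_integral fun x y => (hu x y).1,
      funext fun x => (hfix hu₁ x).trans (hu c x).1.symm, hu₁⟩
  · rintro ⟨hcont, hFu, hu₁⟩ x y
    have hh := locallyIntegrable_mul_sub hs hf hcont
    have hwu₁ : LocallyIntegrable fun t => w t * u₁ t := by
      rw [hu₁]
      exact locallyIntegrable_mul_add_primitive hw hh c (u₁ c)
    have hu (x : ℝ) : u x = u c + ∫ t in c..x, w t * u₁ t :=
      (congrFun hFu x).symm.trans (hfix hu₁ x)
    constructor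
    · rw [hu y, hu x, add_assoc, intervalIntegral.integral_add_adjacent_intervals] <;>
        exact intervalIntegrable_of_locallyIntegrable hwu₁ _ _
    · rw [congrFun hu₁ y, congrFun hu₁ x, add_assoc,
        intervalIntegral.integral_add_adjacent_intervals] <;>
        exact intervalIntegrable_of_locallyIntegrable hh _ _

theorem existsUnique_isIntegralSolution [CompleteSpace 𝔸] [SFinite μ] (hw : LocallyIntegrable w)
    (hs : LocallyIntegrable s μ) (hf : LocallyIntegrable f μ) (c : ℝ) (d₁ d₂ : 𝔸) :
    ∃! U : (ℝ → 𝔸) × (ℝ → 𝔸), IsIntegralSolution μ w s f U.1 U.2 ∧ U.1 c = d₁ ∧ U.2 c = d₂ := by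
  simp only [isIntegralSolution_iff_isFixedPt_volterraMap hw hs hf c]
  obtain ⟨u, hu, hFu⟩ := exists_continuous_isFixedPt_volterraMap hw hs hf c d₁ d₂
  have huc : u c = d₁ := by simpa [volterraMap, iteratedPrimitive] using (congrFun hFu c).symm
  refine ⟨(u, fun x => d₂ + ∫ t in c..x, (s t * u t - f t) ∂μ), by simp [hu, huc, hFu], ?_⟩
  rintro ⟨v, v₁⟩ ⟨⟨hv, hFv, hv₁⟩, rfl, rfl⟩
  obtain rfl : v = u := eq_of_isFixedPt_volterraMap hw hs hf hv hu hFv hFu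
  exact Prod.ext rfl hv₁

end IntegralSystem

section WithDensity

variable {𝕜 : Type*} [RCLike 𝕜]

theorem integrable_mul_of_integrable_withDensity_nnnorm {α : Type*} {_ : MeasurableSpace α}
    {μ : Measure α} {r g : α → 𝕜} (hr : AEMeasurable r μ)
    (hg : Integrable g (μ.withDensity fun t => (‖r t‖₊ : ℝ≥0∞))) :
    Integrable (fun t => r t * g t) μ := by
  rw [integrable_withDensity_iff_integrable_coe_smul₀ hr.nnnorm] at hg
  have hphase : AEStronglyMeasurable (fun t => r t / (‖r t‖ : 𝕜)) μ :=
    (hr.div (RCLike.measurable_ofReal.comp_aemeasurable hr.norm)).aestronglyMeasurable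
  refine (hg.bdd_mul (c := 1) hphase (ae_of_all _ fun t => ?_)).congr (ae_of_all _ fun t => ?_)
  · rw [norm_div, RCLike.norm_ofReal, abs_norm]
    exact div_self_le_one _
  · rcases eq_or_ne (r t) 0 with h0 | h0
    · simp [h0]
    · simp only [coe_nnnorm, RCLike.real_smul_eq_coe_mul]
      rw [← mul_assoc, div_mul_cancel₀ _ (RCLike.ofReal_ne_zero.2 (norm_ne_zero_iff.2 h0))]

theorem locallyIntegrable_mul_of_withDensity_nnnorm {X : Type*} [TopologicalSpace X] [T2Space X]
    [LocallyCompactSpace X] [MeasurableSpace X] [OpensMeasurableSpace X] {μ : Measure X}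
    {r g : X → 𝕜} (hr : LocallyIntegrable r μ)
    (hg : LocallyIntegrable g (μ.withDensity fun t => (‖r t‖₊ : ℝ≥0∞))) :
    LocallyIntegrable (fun t => r t * g t) μ := by
  refine locallyIntegrable_iff.2 fun C hC => integrable_mul_of_integrable_withDensity_nnnorm
    (hr.integrableOn_isCompact hC).aestronglyMeasurable.aemeasurable ?_
  rw [← restrict_withDensity hC.measurableSet]
  exact hg.integrableOn_isCompact hC

end WithDensity

theorem locallyIntegrable_comp_of_monotone {E : Type*} [NormedAddCommGroup E] {f : ℝ → E}
    {φ : ℝ → ℝ} {μ : Measure ℝ} (hφ : Monotone φ) (hf : LocallyIntegrable f (μ.map φ)) :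
    LocallyIntegrable (f ∘ φ) μ := by
  intro x
  refine ⟨Icc (x - 1) (x + 1), Icc_mem_nhds (by linarith) (by linarith), ?_⟩
  have hint := hf.integrableOn_isCompact (isCompact_Icc (a := φ (x - 1)) (b := φ (x + 1)))
  rw [IntegrableOn, Measure.restrict_map hφ.measurable measurableSet_Icc] at hint
  exact IntegrableOn.mono_set (hint.comp_measurable hφ.measurable)
    fun t ht => ⟨hφ ht.1, hφ ht.2⟩

theorem isLocallyFiniteMeasure_of_forall_Ioc_lt_top {μ : Measure ℝ}
    (hμ : ∀ c d : ℝ, c ≤ d → μ (Ioc c d) < ∞) : IsLocallyFiniteMeasure μ :=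
  ⟨fun x => ⟨Ioc (x - 1) (x + 1), Ioc_mem_nhds (by linarith) (by linarith),
    hμ _ _ (by linarith)⟩⟩

section TimeScale

variable {T : Set ℝ} {s t : ℝ}

/-- The point of a time scale `K` at which functions on `K` are evaluated when they are extended to
`t ∈ ℝ`: the first point of `K` in `[t, ∞)`, or `sup K` if there is none. -/
noncomputable def tsCeil (K : Set ℝ) (t : ℝ) : ℝ :=
  if (K ∩ Ici t).Nonempty then sInf (K ∩ Ici t) else sSup K

theorem monotone_tsCeil (K : Set ℝ) : Monotone (tsCeil K) := by
  intro x y hxy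
  have hbdd : BddBelow (K ∩ Ici x) := ⟨x, fun _ hs => hs.2⟩
  unfold tsCeil
  by_cases hy : (K ∩ Ici y).Nonempty
  · have hsub : K ∩ Ici y ⊆ K ∩ Ici x := inter_subset_inter_right K (Ici_subset_Ici.2 hxy)
    rw [if_pos hy, if_pos (hy.mono hsub)]
    exact csInf_le_csInf hbdd hy hsub
  rw [if_neg hy]
  split_ifs with hx
  · obtain ⟨s, hs⟩ := hx
    have hKy : BddAbove K := ⟨y, fun k hk => le_of_not_ge fun hyk => hy ⟨k, hk, hyk⟩⟩
    exact (csInf_le hbdd hs).trans (le_csSup hKy hs.1)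
  · exact le_rfl

theorem integrableOn_comp_tsCeil_lowerBounds {E : Type*} [NormedAddCommGroup E] (f : ℝ → E)
    (K : Set ℝ) {C : Set ℝ} (hC : IsCompact C) :
    IntegrableOn (f ∘ tsCeil K) (C ∩ lowerBounds K) := by
  have hlower : IsLowerSet (lowerBounds K) := fun _ _ hba ha s hs => hba.trans (ha hs)
  refine IntegrableOn.congr_fun (f := fun _ => f (if K.Nonempty then sInf K else sSup K))
    (integrableOn_const (measure_inter_lt_top_of_left_ne_top hC.measure_ne_top).ne) ?_
    (hC.measurableSet.inter hlower.ordConnected.measurableSet)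
  intro t ht
  have hinter : K ∩ Ici t = K := inter_eq_left.2 ht.2
  simp only [Function.comp_apply, tsCeil, hinter]

theorem integrableOn_comp_tsCeil_of_forall_lt {E : Type*} [NormedAddCommGroup E] (f : ℝ → E)
    (K : Set ℝ) {C : Set ℝ} (hC : IsCompact C) :
    IntegrableOn (f ∘ tsCeil K) (C ∩ {t | ∀ s ∈ K, s < t}) := by
  have hupper : IsUpperSet {t | ∀ s ∈ K, s < t} := fun _ _ hab ha s hs => (ha s hs).trans_le hab
  refine IntegrableOn.congr_fun (f := fun _ => f (sSup K))
    (integrableOn_const (measure_inter_lt_top_of_left_ne_top hC.measure_ne_top).ne) ?_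
    (hC.measurableSet.inter hupper.ordConnected.measurableSet)
  intro t ht
  have hempty : ¬(K ∩ Ici t).Nonempty := fun ⟨s, hs⟩ => (ht.2 s hs.1).not_ge hs.2
  simp only [Function.comp_apply, tsCeil, if_neg hempty]

theorem extK_eq_comp_tsCeil (T : Set ℝ) (p : ℝ → ℂ) : extK T p = p ∘ tsCeil (tsKappa T) := by
  funext t
  by_cases ht : t ∈ tsKappa T
  · have hleast : IsLeast (tsKappa T ∩ Ici t) t := ⟨⟨ht, self_mem_Ici⟩, fun _ hs => hs.2⟩
    rw [extK, if_pos ht, Function.comp_apply, tsCeil, if_pos hleast.nonempty, hleast.csInf_eq]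
  · have hIoi : {s | s ∈ tsKappa T ∧ t < s} = tsKappa T ∩ Ici t := Set.ext fun s =>
      and_congr_right fun hs => ⟨le_of_lt, fun hts => hts.lt_of_ne fun h => ht (h ▸ hs)⟩
    rw [extK, if_neg ht, tsSigma, hIoi, Function.comp_apply, tsCeil]

theorem tsKappa_subset (T : Set ℝ) : tsKappa T ⊆ T := by
  unfold tsKappa
  split_ifs
  exacts [sdiff_subset, subset_rfl]

theorem mem_tsKappa_of_lt (hs : s ∈ T) (ht : t ∈ T) (hst : s < t) : t ∈ tsKappa T := by
  unfold tsKappa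
  split_ifs with hT
  · exact ⟨ht, ((csInf_le hT.1 hs).trans_lt hst).ne'⟩
  · exact ht

theorem tsKappa_inter_Ici (hs : s ∈ T) (hst : s < t) : tsKappa T ∩ Ici t = T ∩ Ici t :=
  Subset.antisymm (inter_subset_inter_left _ (tsKappa_subset T))
    fun _ hx => ⟨mem_tsKappa_of_lt hs hx.1 (hst.trans_le hx.2), hx.2⟩

/-- The interval of all points with a point of `T` strictly below and one at or above them: the
convex hull of `T` without its minimum. -/
def tsHull (T : Set ℝ) : Set ℝ :=
  {t | (∃ s ∈ T, s < t) ∧ ∃ s ∈ T, t ≤ s}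

theorem tsCeil_tsKappa_lt_iff (ht : t ∈ tsHull T) {d : ℝ} :
    tsCeil (tsKappa T) t < d ↔ ∃ s ∈ T, t ≤ s ∧ s < d := by
  obtain ⟨⟨s, hs, hst⟩, s', hs', hts'⟩ := ht
  have hne : (T ∩ Ici t).Nonempty := ⟨s', hs', hts'⟩
  rw [tsCeil, tsKappa_inter_Ici hs hst, if_pos hne, csInf_lt_iff ⟨t, fun _ hx => hx.2⟩ hne]
  simp only [mem_inter_iff, mem_Ici, and_assoc]

theorem exists_mem_lt_of_tsRho_lt (hT : T.Nonempty) {d : ℝ} (h : tsRho T d < t) :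
    ∃ s ∈ T, s < t := by
  unfold tsRho at h
  split_ifs at h with hd
  · obtain ⟨s, hs⟩ := hd
    exact ⟨s, hs.1, (le_csSup ⟨d, fun _ hx => hx.2.le⟩ hs).trans_lt h⟩
  · exact exists_lt_of_csInf_lt hT h

theorem exists_mem_Ico_of_lt_tsRho (hs : s ∈ T) (hst : s < t) {d : ℝ} (h : t < tsRho T d) :
    ∃ x ∈ T, t ≤ x ∧ x < d := by
  unfold tsRho at h
  split_ifs at h with hd
  · obtain ⟨x, hx, htx⟩ := exists_lt_of_lt_csSup hd h
    exact ⟨x, hx.1, htx.le, hx.2⟩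
  · have hbdd : BddBelow T := ⟨d, fun x hx => le_of_not_gt fun hxd => hd ⟨x, hx, hxd⟩⟩
    exact absurd (csInf_le hbdd hs) (hst.trans h).not_ge

theorem le_tsRho_of_lt {d : ℝ} (hs : s ∈ T) (hsd : s < d) : s ≤ tsRho T d := by
  rw [tsRho, if_pos ⟨s, hs, hsd⟩]
  exact le_csSup ⟨d, fun _ hx => hx.2.le⟩ ⟨hs, hsd⟩

theorem Ioo_tsRho_subset (hT : T.Nonempty) (a b : ℝ) :
    Ioo (tsRho T a) (tsRho T b) ⊆ tsCeil (tsKappa T) ⁻¹' Ico a b ∩ tsHull T := by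
  rintro t ⟨hat, htb⟩
  obtain ⟨s, hs, hst⟩ := exists_mem_lt_of_tsRho_lt hT hat
  obtain ⟨x, hx, htx, hxb⟩ := exists_mem_Ico_of_lt_tsRho hs hst htb
  have ht : t ∈ tsHull T := ⟨⟨s, hs, hst⟩, x, hx, htx⟩
  refine ⟨⟨le_of_not_gt fun hlt => ?_, (tsCeil_tsKappa_lt_iff ht).2 ⟨x, hx, htx, hxb⟩⟩, ht⟩
  obtain ⟨y, hy, hty, hya⟩ := (tsCeil_tsKappa_lt_iff ht).1 hlt
  exact hat.not_ge (hty.trans (le_tsRho_of_lt hy hya))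

theorem preimage_tsCeil_Ico_inter_subset (a b : ℝ) :
    tsCeil (tsKappa T) ⁻¹' Ico a b ∩ tsHull T ⊆ Icc (tsRho T a) (tsRho T b) := by
  rintro t ⟨⟨hat, htb⟩, ht⟩
  obtain ⟨s, hs, hst⟩ := ht.1
  obtain ⟨x, hx, htx, hxb⟩ := (tsCeil_tsKappa_lt_iff ht).1 htb
  refine ⟨le_of_not_gt fun hlt => hat.not_gt ?_, htx.trans (le_tsRho_of_lt hx hxb)⟩
  exact (tsCeil_tsKappa_lt_iff ht).2 (exists_mem_Ico_of_lt_tsRho hs hst hlt)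

theorem eq_map_tsCeil_of_forall_Ico (hT : T.Nonempty) {ν : Measure ℝ}
    (hν : ∀ c d : ℝ, c ≤ d → ν (Ico c d) = ENNReal.ofReal (tsRho T d - tsRho T c)) :
    ν = (volume.restrict (tsHull T)).map (tsCeil (tsKappa T)) := by
  have hmeas := (monotone_tsCeil (tsKappa T)).measurable
  refine Measure.ext_of_Ico' _ _ (fun {a b} hab => ?_) fun {a b} hab => ?_
  · rw [hν a b hab.le]
    exact ENNReal.ofReal_ne_top
  rw [hν a b hab.le, Measure.map_apply hmeas measurableSet_Ico,
    Measure.restrict_apply (hmeas measurableSet_Ico)]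
  apply le_antisymm
  · exact Real.volume_Ioo.symm.trans_le (measure_mono (Ioo_tsRho_subset hT a b))
  · exact (measure_mono (preimage_tsCeil_Ico_inter_subset a b)).trans_eq Real.volume_Icc

theorem locallyIntegrable_one_div_extK (hT : T.Nonempty) {ν : Measure ℝ}
    (hν : ∀ c d : ℝ, c ≤ d → ν (Ico c d) = ENNReal.ofReal (tsRho T d - tsRho T c))
    {p : ℝ → ℂ} (hp : LocallyIntegrable (fun t => 1 / p t) ν) :
    LocallyIntegrable fun t => 1 / extK T p t := by
  rw [extK_eq_comp_tsCeil]
  rw [eq_map_tsCeil_of_forall_Ico hT hν] at hp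
  refine locallyIntegrable_iff.2 fun C hC => ?_
  have hhull :=
    (locallyIntegrable_comp_of_monotone (monotone_tsCeil _) hp).integrableOn_isCompact hC
  rw [IntegrableOn, Measure.restrict_restrict hC.measurableSet] at hhull
  refine ((IntegrableOn.union hhull
    (integrableOn_comp_tsCeil_lowerBounds (fun t => 1 / p t) (tsKappa T) hC)).union
    (integrableOn_comp_tsCeil_of_forall_lt (fun t => 1 / p t) (tsKappa T) hC)).mono_set ?_
  intro t ht
  by_cases hbelow : ∃ s ∈ T, s < t
  · by_cases habove : ∃ s ∈ T, t ≤ s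
    · exact .inl (.inl ⟨ht, hbelow, habove⟩)
    · push Not at habove
      exact .inr ⟨ht, fun s hs => habove s (tsKappa_subset T hs)⟩
  · push Not at hbelow
    exact .inl (.inr ⟨ht, fun s hs => hbelow s (tsKappa_subset T hs)⟩)

theorem isSLSol_iff_isIntegralSolution {μ : Measure ℝ} {p r q g u u₁ : ℝ → ℂ} {z : ℂ} :
    IsSLSol T μ p r q z g u u₁ ↔
      IsIntegralSolution μ (fun t => 1 / extK T p t) (fun t => q t - z * r t)
        (fun t => r t * g t) u u₁ := by
  simp only [IsIntegralSolution, one_div_mul_eq_div]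
  constructor
  · intro h x y
    rcases le_total x y with hxy | hyx
    · rw [intervalIntegral.integral_of_le (μ := μ) hxy]
      exact h x y hxy
    · rw [intervalIntegral.integral_symm y x, intervalIntegral.integral_symm (μ := μ) y x,
        intervalIntegral.integral_of_le (μ := μ) hyx, ← sub_eq_add_neg, ← sub_eq_add_neg]
      exact (h y x hyx).imp (fun hu => eq_sub_of_add_eq hu.symm)
        fun hu₁ => eq_sub_of_add_eq hu₁.symm
  · intro h x y hxy
    rw [← intervalIntegral.integral_of_le (μ := μ) hxy]
    exact h x y

end TimeScale

theorem existsUnique_solution_sturm_liouville_time_scale_general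
    (T : Set ℝ) (hne : T.Nonempty) (μ ν : Measure ℝ)
    (hμ : ∀ c d : ℝ, c ≤ d →
      μ (Set.Ioc c d) = ENNReal.ofReal (tsSigma (tsKappa T) d - tsSigma (tsKappa T) c))
    (hν : ∀ c d : ℝ, c ≤ d → ν (Set.Ico c d) = ENNReal.ofReal (tsRho T d - tsRho T c))
    (p r q : ℝ → ℂ)
    (hr : LocallyIntegrable r μ) (hq : LocallyIntegrable q μ)
    (hp : LocallyIntegrable (fun t => 1 / p t) ν)
    (g : ℝ → ℂ) (hg : LocallyIntegrable g (μ.withDensity fun t => ((‖r t‖₊ : ℝ≥0∞))))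
    (z : ℂ) (c : ℝ) (d₁ d₂ : ℂ) :
    ∃! U : (ℝ → ℂ) × (ℝ → ℂ),
      IsSLSol T μ p r q z g U.1 U.2 ∧ U.1 c = d₁ ∧ U.2 c = d₂ := by
  have : IsLocallyFiniteMeasure μ := isLocallyFiniteMeasure_of_forall_Ioc_lt_top
    fun c d hcd => (hμ c d hcd).trans_lt ENNReal.ofReal_lt_top
  simp only [isSLSol_iff_isIntegralSolution]
  exact existsUnique_isIntegralSolution (locallyIntegrable_one_div_extK hne hν hp)
    (hq.sub (hr.smul z)) (locallyIntegrable_mul_of_withDensity_nnnorm hr hg) c d₁ d₂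

/-- Existence and uniqueness: for `g` locally integrable with respect to `|r| dσ_κ`, `z ∈ ℂ`,
`c ∈ 𝕋_κ` and `d₁, d₂ ∈ ℂ` there is a unique solution pair `(u, u^[1])` of `(ℓ - z) u = g`
with `u(c) = d₁` and `u^[1](c) = d₂`. -/
theorem existsUnique_solution_sturm_liouville_time_scale
    (T : Set ℝ) (hne : T.Nonempty) (hcl : IsClosed T)
    (hfive : ∃ s : Finset ℝ, ↑s ⊆ T ∧ 5 ≤ s.card)
    (μ ν : Measure ℝ)
    (hμ : ∀ c d : ℝ, c ≤ d →
      μ (Set.Ioc c d) = ENNReal.ofReal (tsSigma (tsKappa T) d - tsSigma (tsKappa T) c))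
    (hν : ∀ c d : ℝ, c ≤ d → ν (Set.Ico c d) = ENNReal.ofReal (tsRho T d - tsRho T c))
    (p r q : ℝ → ℂ)
    (hr : LocallyIntegrable r μ) (hq : LocallyIntegrable q μ)
    (hp : LocallyIntegrable (fun t => 1 / p t) ν)
    (g : ℝ → ℂ) (hg : LocallyIntegrable g (μ.withDensity fun t => ((‖r t‖₊ : ℝ≥0∞))))
    (z : ℂ) :
    ∀ c ∈ tsKappa T, ∀ d₁ d₂ : ℂ,
      ∃! U : (ℝ → ℂ) × (ℝ → ℂ),
        IsSLSol T μ p r q z g U.1 U.2 ∧ U.1 c = d₁ ∧ U.2 c = d₂ := fun c _ d₁ d₂ =>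
  existsUnique_solution_sturm_liouville_time_scale_general T hne μ ν hμ hν p r q hr hq hp g hg z
    c d₁ d₂
end
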